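/- arXiv:2306.17272 — 2 statements merged into one kernel-verified Lean document; each statement's English description precedes it below -/
import Mathlib

section
/- Let G be a connected graph containing no cycle of length 3 and no cycle of length 5 (as subgraphs). Then G belongs to the class W2 if and only if G is isomorphic to K2. -/
open SimpleGraph

/-- A set of vertices is independent if its elements are pairwise nonadjacent. -/
def IsIndep {V : Type*} (G : SimpleGraph V) (S : Set V) : Prop :=
  S.Pairwise fun a b => ¬ G.Adj a b

/-- The closed neighborhood `N[S]` of a set of vertices. -/
def closedNbhd {V : Type*} (G : SimpleGraph V) (S : Set V) : Set V :=
  S ∪ {x | ∃ s ∈ S, G.Adj s x}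

/-- The open neighborhood `N(S) = N[S] \ S` of a set of vertices. -/
def openNbhd {V : Type*} (G : SimpleGraph V) (S : Set V) : Set V :=
  closedNbhd G S \ S

/-- `S` dominates `T` if `T ⊆ N[S]`. -/
def Dominates {V : Type*} (G : SimpleGraph V) (S T : Set V) : Prop :=
  T ⊆ closedNbhd G S

/-- `N₂(v)`: the set of vertices at distance exactly 2 from `v`. -/
def N2 {V : Type*} (G : SimpleGraph V) (v : V) : Set V :=
  {u | u ≠ v ∧ ¬ G.Adj v u ∧ ∃ w, G.Adj v w ∧ G.Adj w u}

/-- A maximal independent set of the subgraph of `G` induced by `A`. -/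
def IsMaximalIndepOn {V : Type*} (G : SimpleGraph V) (A S : Set V) : Prop :=
  S ⊆ A ∧ IsIndep G S ∧ ∀ T, T ⊆ A → IsIndep G T → S ⊆ T → S = T

/-- A maximal independent set of `G`. -/
def IsMaximalIndep {V : Type*} (G : SimpleGraph V) (S : Set V) : Prop :=
  IsMaximalIndepOn G Set.univ S

/-- A maximum independent set of the subgraph of `G` induced by `A`. -/
def IsMaxIndepOn {V : Type*} (G : SimpleGraph V) (A S : Set V) : Prop :=
  S ⊆ A ∧ IsIndep G S ∧ ∀ T, T ⊆ A → IsIndep G T → T.ncard ≤ S.ncard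

/-- A maximum independent set of `G`. -/
def IsMaxIndep {V : Type*} (G : SimpleGraph V) (S : Set V) : Prop :=
  IsMaxIndepOn G Set.univ S

/-- The independence number of the subgraph of `G` induced by `A`. -/
noncomputable def alphaOn {V : Type*} (G : SimpleGraph V) (A : Set V) : ℕ :=
  sSup {n | ∃ S, S ⊆ A ∧ IsIndep G S ∧ S.ncard = n}

/-- The independence number `α(G)`. -/
noncomputable def alpha {V : Type*} (G : SimpleGraph V) : ℕ :=
  alphaOn G Set.univ

/-- The subgraph of `G` induced by `A` is well-covered. -/
def WellCoveredOn {V : Type*} (G : SimpleGraph V) (A : Set V) : Prop :=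
  ∀ S, IsMaximalIndepOn G A S → IsMaxIndepOn G A S

/-- `G` is well-covered: every maximal independent set is maximum. -/
def WellCovered {V : Type*} (G : SimpleGraph V) : Prop :=
  WellCoveredOn G Set.univ

/-- The subgraph of `G` induced by `A` is in the class `W₂`. -/
def W2On {V : Type*} (G : SimpleGraph V) (A : Set V) : Prop :=
  ∀ S₁ S₂ : Set V, S₁ ⊆ A → S₂ ⊆ A → IsIndep G S₁ → IsIndep G S₂ → Disjoint S₁ S₂ →
    ∃ T₁ T₂ : Set V, S₁ ⊆ T₁ ∧ S₂ ⊆ T₂ ∧ IsMaxIndepOn G A T₁ ∧ IsMaxIndepOn G A T₂ ∧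
      Disjoint T₁ T₂

/-- `G` belongs to the class `W₂`: every two pairwise disjoint independent sets are
included in two pairwise disjoint maximum independent sets. -/
def W2 {V : Type*} (G : SimpleGraph V) : Prop :=
  W2On G Set.univ

/-- `v` is a shedding vertex: for every independent set `S ⊆ V(G) \ N[v]` there exists
`u ∈ N(v)` such that `S ∪ {u}` is independent. -/
def Shedding {V : Type*} (G : SimpleGraph V) (v : V) : Prop :=
  ∀ S : Set V, Disjoint S (closedNbhd G {v}) → IsIndep G S →
    ∃ u ∈ G.neighborSet v, IsIndep G (insert u S)

/-- The edge `xy` is relating: there is an independent set `S ⊆ V(G) \ N[{x,y}]` such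
that both `S ∪ {x}` and `S ∪ {y}` are maximal independent sets of `G`. -/
def Relating {V : Type*} (G : SimpleGraph V) (x y : V) : Prop :=
  ∃ S : Set V, IsIndep G S ∧ Disjoint S (closedNbhd G {x, y}) ∧
    IsMaximalIndep G (insert x S) ∧ IsMaximalIndep G (insert y S)

/-- `G` contains no cycle of length `k` (as a subgraph). -/
def CycleFree {V : Type*} (G : SimpleGraph V) (k : ℕ) : Prop :=
  ∀ (u : V) (w : G.Walk u u), w.IsCycle → w.length ≠ k

/-- A vertex is simplicial if its closed neighborhood is a clique. -/
def Simplicial {V : Type*} (G : SimpleGraph V) (v : V) : Prop :=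
  G.IsClique (closedNbhd G {v})


theorem aux_triangle {V : Type*} {G : SimpleGraph V} (h3 : CycleFree G 3) {a b c : V}
    (h1 : G.Adj a b) (h2 : G.Adj b c) (h4 : G.Adj c a) : False := by
  refine h3 a (.cons h1 (.cons h2 (.cons h4 .nil))) ?_ rfl
  have n1 := h1.ne
  have n2 := h2.ne
  have n3 := h4.ne
  rw [SimpleGraph.Walk.cons_isCycle_iff]
  simp [SimpleGraph.Walk.isPath_def]
  grind

theorem aux_pentagon {V : Type*} {G : SimpleGraph V} (h5 : CycleFree G 5) {a b c d e : V}
    (h1 : G.Adj a b) (h2 : G.Adj b c) (h3 : G.Adj c d) (h4 : G.Adj d e) (h6 : G.Adj e a)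
    (ac : a ≠ c) (ad : a ≠ d) (bd : b ≠ d) (be : b ≠ e) (ce : c ≠ e) : False := by
  refine h5 a (.cons h1 (.cons h2 (.cons h3 (.cons h4 (.cons h6 .nil))))) ?_ rfl
  have n1 := h1.ne
  have n2 := h2.ne
  have n3 := h3.ne
  have n4 := h4.ne
  have n5 := h6.ne
  rw [SimpleGraph.Walk.cons_isCycle_iff]
  simp [SimpleGraph.Walk.isPath_def]
  grind

theorem aux_shed {V : Type*} [Finite V] {G : SimpleGraph V} (h : W2 G) (v : V) (S : Set V)
    (hS : IsIndep G S) (hv : v ∉ S) (_hd : ∀ s ∈ S, ¬ G.Adj v s) :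
    ∃ u, G.Adj v u ∧ ∀ s ∈ S, ¬ G.Adj u s := by
  obtain ⟨T1, T2, h1, h2, -, ⟨-, i2, m2⟩, hdis⟩ := h {v} S (Set.subset_univ _) (Set.subset_univ _)
    (Set.pairwise_singleton _ _) hS (by simpa using hv)
  have hvT : v ∉ T2 := Set.disjoint_left.1 hdis (h1 rfl)
  have : ∃ u ∈ T2, G.Adj v u := by
    by_contra! hc
    have hi : IsIndep G (insert v T2) := by
      intro a ha b hb hab
      rcases ha with rfl | ha <;> rcases hb with rfl | hb
      · exact (hab rfl).elim
      · exact hc b hb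
      · exact fun h => hc a ha h.symm
      · exact i2 ha hb hab
    have := m2 _ (Set.subset_univ _) hi
    rw [Set.ncard_insert_of_notMem hvT (Set.toFinite _)] at this
    omega
  obtain ⟨u, hu, hvu⟩ := this
  refine ⟨u, hvu, fun s hs hus => i2 hu (h2 hs) hus.ne hus⟩

theorem aux_leaf {V : Type*} [Finite V] {G : SimpleGraph V}
    (h3 : CycleFree G 3) (h5 : CycleFree G 5) (h : W2 G) (v : V) :
    ∃ u, G.Adj v u ∧ ∀ x, G.Adj u x → x = v := by
  obtain ⟨u, hvu, hu⟩ := aux_shed h v (N2 G v) (by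
    rintro a ⟨av, hva, p, hvp, hpa⟩ b ⟨bv, hvb, q, hvq, hqb⟩ hab hadj
    by_cases hpq : p = q
    · subst hpq
      exact aux_triangle h3 hpa hadj hqb.symm
    · refine aux_pentagon h5 hvp hpa hadj hqb.symm hvq.symm av.symm bv.symm ?_ hpq ?_
      · rintro rfl; exact hvb hvp
      · rintro rfl; exact hva hvq) (fun h => h.1 rfl) (fun s hs => hs.2.1)
  refine ⟨u, hvu, fun x hux => ?_⟩
  by_contra hx
  exact hu x ⟨hx, fun hvx => aux_triangle h3 hvu hux hvx.symm, u, hvu, hux⟩ hux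

/-- A connected graph with no cycles of lengths 3 and 5 is in `W₂`
iff it is isomorphic to `K₂`. -/
theorem stmt2 {V : Type*} [Fintype V] (G : SimpleGraph V) (hconn : G.Connected)
    (h3 : CycleFree G 3) (h5 : CycleFree G 5) :
    W2 G ↔ Nonempty (G ≃g (⊤ : SimpleGraph (Fin 2))) := by
  classical
  constructor
  · intro h
    obtain ⟨v⟩ := hconn.nonempty
    obtain ⟨u, hvu, hu⟩ := aux_leaf h3 h5 h v
    obtain ⟨w, huw, hw⟩ := aux_leaf h3 h5 h u
    obtain rfl := hu w huw
    have key : ∀ a b : V, G.Walk a b → (a = w ∨ a = u) → (b = w ∨ b = u) := by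
      intro a b p
      induction p with
      | nil => exact id
      | cons hadj _ ih =>
        rintro (rfl | rfl)
        · exact ih (Or.inr (hw _ hadj))
        · exact ih (Or.inl (hu _ hadj))
    have all : ∀ b, b = w ∨ b = u := fun b => by
      obtain ⟨p⟩ := hconn.preconnected w b
      exact key _ _ p (Or.inl rfl)
    have hne := hvu.ne
    refine ⟨⟨⟨fun x => if x = w then 0 else 1, fun i => if i = 0 then w else u, ?_, ?_⟩, ?_⟩⟩
    · intro x
      rcases all x with rfl | rfl <;> simp [hne.symm]
    · intro i
      fin_cases i <;> simp [hne.symm]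
    · intro a b
      rcases all a with rfl | rfl <;> rcases all b with rfl | rfl <;>
        simp [hne.symm, hvu, huw]
  · rintro ⟨e⟩
    have adj : ∀ a b, a ≠ b → G.Adj a b := fun a b hab => by
      rw [← e.map_adj_iff]; simpa using hab
    have all : ∀ x, x = e.symm 0 ∨ x = e.symm 1 := fun x => by
      have : e x = 0 ∨ e x = 1 := by omega
      rcases this with h | h
      · left; rw [← h]; simp
      · right; rw [← h]; simp
    have hne : e.symm 0 ≠ e.symm 1 := by simp
    generalize e.symm 0 = a at *
    generalize e.symm 1 = b at *
    have sub : ∀ S, IsIndep G S → S.Subsingleton := fun S hS x hx y hy => by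
      by_contra hxy
      exact hS hx hy hxy (adj _ _ hxy)
    have mx : ∀ x, IsMaxIndepOn G Set.univ {x} := fun x =>
      ⟨Set.subset_univ _, Set.pairwise_singleton _ _, fun T _ hT => by
        rw [Set.ncard_singleton, Set.ncard_le_one_iff_subsingleton]
        exact sub T hT⟩
    intro S1 S2 _ _ i1 i2 hd
    have s1 := sub _ i1
    have s2 := sub _ i2
    rw [Set.disjoint_left] at hd
    by_cases hc : b ∈ S1 ∨ a ∈ S2
    · refine ⟨{b}, {a}, ?_, ?_, mx b, mx a, by simpa using hne.symm⟩
      · intro x hx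
        rcases all x with rfl | rfl
        · rcases hc with hc | hc
          · exact s1 hx hc
          · exact (hd hx hc).elim
        · rfl
      · intro x hx
        rcases all x with rfl | rfl
        · rfl
        · rcases hc with hc | hc
          · exact (hd hc hx).elim
          · exact s2 hx hc
    · push Not at hc
      refine ⟨{a}, {b}, ?_, ?_, mx a, mx b, by simpa using hne⟩
      · intro x hx
        rcases all x with rfl | rfl
        · rfl
        · exact (hc.1 hx).elim
      · intro x hx
        rcases all x with rfl | rfl
        · exact (hc.2 hx).elim
        · rfl
end

section
/- Let G be a graph having no isolated vertices. Then the following are equivalent: (1) G belongs to the class W2; (2) G is not isomorphic to the path P3 and the graph G − v obtained by deleting v is well-covered for every vertex v ∈ V(G). -/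
open SimpleGraph

theorem IsIndep.mono' {V : Type*} {G : SimpleGraph V} {S T : Set V} (h : IsIndep G T)
    (hs : S ⊆ T) : IsIndep G S := Set.Pairwise.mono hs h

theorem indep_not_adj {V : Type*} {G : SimpleGraph V} {S : Set V} (h : IsIndep G S) {a b : V}
    (ha : a ∈ S) (hb : b ∈ S) : ¬ G.Adj a b := by
  intro hab
  exact h ha hb hab.ne hab

theorem indep_iff {V : Type*} {G : SimpleGraph V} {S : Set V} :
    IsIndep G S ↔ ∀ a ∈ S, ∀ b ∈ S, ¬ G.Adj a b :=
  ⟨fun h _ ha _ hb => indep_not_adj h ha hb, fun h a ha b hb _ => h a ha b hb⟩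

theorem indep_insert {V : Type*} {G : SimpleGraph V} {S : Set V} (h : IsIndep G S) {x : V}
    (hx : ∀ a ∈ S, ¬ G.Adj x a) : IsIndep G (insert x S) := by
  rw [indep_iff] at *
  rintro a (rfl | ha) b (rfl | hb) hab
  · exact hab.ne rfl
  · exact hx b hb hab
  · exact hx a ha hab.symm
  · exact h a ha b hb hab

theorem exists_maximal {V : Type*} [Fintype V] {G : SimpleGraph V} {A S : Set V} (hA : S ⊆ A)
    (h : IsIndep G S) : ∃ T, S ⊆ T ∧ IsMaximalIndepOn G A T := by
  obtain ⟨T, hT, hmax⟩ := (Set.toFinite {T : Set V | S ⊆ T ∧ T ⊆ A ∧ IsIndep G T}).exists_le_maximal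
    (a := S) ⟨subset_rfl, hA, h⟩
  refine ⟨T, hT, hmax.prop.2.1, hmax.prop.2.2, fun U hU hUi hTU => ?_⟩
  exact subset_antisymm hTU (hmax.le_of_ge ⟨hT.trans hTU, hU, hUi⟩ hTU)

theorem maximal_of_subset {V : Type*} {G : SimpleGraph V} {A S : Set V}
    (h : IsMaximalIndep G S) (hA : S ⊆ A) : IsMaximalIndepOn G A S :=
  ⟨hA, h.2.1, fun T _ hT hST => h.2.2 T (Set.subset_univ _) hT hST⟩

theorem maximal_of_max {V : Type*} [Fintype V] {G : SimpleGraph V} {A S : Set V}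
    (h : IsMaxIndepOn G A S) : IsMaximalIndepOn G A S :=
  ⟨h.1, h.2.1, fun T hA hT hST =>
    Set.eq_of_subset_of_ncard_le hST (h.2.2 T hA hT) (Set.toFinite _)⟩

theorem maximal_adj {V : Type*} {G : SimpleGraph V} {S : Set V}
    (h : IsMaximalIndep G S) {x : V} (hx : x ∉ S) : ∃ s ∈ S, G.Adj x s := by
  by_contra! hc
  have := h.2.2 _ (Set.subset_univ _) (indep_insert h.2.1 hc) (Set.subset_insert _ _)
  exact hx (this ▸ Set.mem_insert _ _)

theorem W2.not_path {V : Type*} [Fintype V] {G : SimpleGraph V} (h : W2 G) :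
    IsEmpty (G ≃g pathGraph 3) := by
  refine ⟨fun e => ?_⟩
  obtain ⟨T, -, hbT, -, hT, -, -⟩ := h {e.symm 1} ∅ (Set.subset_univ _) (Set.subset_univ _)
    (Set.pairwise_singleton _ _) (Set.pairwise_empty _) (by simp)
  have hne : e.symm 0 ≠ e.symm 2 := by simp
  have hac : IsIndep G {e.symm 0, e.symm 2} := by
    rw [indep_iff]
    have : ∀ i j, G.Adj (e.symm i) (e.symm j) ↔ (pathGraph 3).Adj i j := fun i j => e.symm.map_adj_iff
    rintro a (rfl | rfl) b (rfl | rfl) <;> rw [this, pathGraph_adj] <;> decide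
  have h2 := hT.2.2 _ (Set.subset_univ _) hac
  rw [Set.ncard_pair hne] at h2
  obtain ⟨x, hx, hxb⟩ := Set.exists_ne_of_one_lt_ncard (by omega : 1 < T.ncard) (e.symm 1)
  apply indep_not_adj hT.2.1 hx (hbT rfl)
  rw [← e.map_adj_iff, e.apply_symm_apply, pathGraph_adj]
  have : e x ≠ 1 := fun h => hxb (by rw [← h, e.symm_apply_apply])
  generalize e x = i at this
  revert i; decide

theorem W2.wc {V : Type*} [Fintype V] {G : SimpleGraph V} (h : W2 G) (v : V) :
    WellCoveredOn G {v}ᶜ := by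
  intro S hS
  obtain ⟨T₁, T₂, h1, h2, hT1, -, hd⟩ := h S {v} (Set.subset_univ _) (Set.subset_univ _)
    hS.2.1 (Set.pairwise_singleton _ _) (by
      rw [Set.disjoint_singleton_right]; exact fun hv => hS.1 hv rfl)
  have hv : T₁ ⊆ {v}ᶜ := by
    rintro x hx rfl
    exact Set.disjoint_left.1 hd hx (h2 rfl)
  rw [hS.2.2 T₁ hv hT1.2.1 h1]
  exact ⟨hv, hT1.2.1, fun T _ hT => hT1.2.2 T (Set.subset_univ _) hT⟩

theorem path_iso {V : Type*} {G : SimpleGraph V} {s t u : V}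
    (hV : ∀ x, x = s ∨ x = t ∨ x = u) (htu : t ≠ u) (h1 : G.Adj s t) (h2 : G.Adj s u)
    (h3 : ¬ G.Adj t u) : Nonempty (G ≃g pathGraph 3) := by
  have hb : Function.Bijective (![t, s, u] : Fin 3 → V) := by
    constructor
    · have := h1.ne
      have := h2.ne
      intro i j hij
      fin_cases i <;> fin_cases j <;> simp_all
    · intro x
      rcases hV x with rfl | rfl | rfl
      · exact ⟨1, rfl⟩
      · exact ⟨0, rfl⟩
      · exact ⟨2, rfl⟩
  have h3' : ¬ G.Adj u t := fun h => h3 h.symm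
  refine ⟨RelIso.symm ⟨Equiv.ofBijective _ hb, ?_⟩⟩
  intro i j
  rw [pathGraph_adj]
  fin_cases i <;> fin_cases j <;> simp [h1, h2, h3, h3', h1.symm, h2.symm]

theorem wellCovered_of {V : Type*} [Fintype V] {G : SimpleGraph V}
    (hiso : ∀ v : V, (G.neighborSet v).Nonempty) (hp : IsEmpty (G ≃g pathGraph 3))
    (hw : ∀ v : V, WellCoveredOn G {v}ᶜ) : WellCovered G := by
  intro S hS
  refine ⟨Set.subset_univ _, hS.2.1, fun T₀ _ hT₀ => ?_⟩
  obtain ⟨T, hTT, hT⟩ := exists_maximal (Set.subset_univ T₀) hT₀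
  refine (Set.ncard_le_ncard hTT (Set.toFinite _)).trans ?_
  by_contra! hlt
  have hTi := hT.2.1
  have hSi := hS.2.1
  have key : ∀ {A : Set V} {v : V}, IsMaximalIndep G A → v ∉ A → ∀ B : Set V, IsIndep G B →
      v ∉ B → B.ncard ≤ A.ncard := by
    intro A v hA hv B hB hvB
    exact (hw v A (maximal_of_subset hA (Set.subset_compl_singleton_iff.2 hv))).2.2 B
      (Set.subset_compl_singleton_iff.2 hvB) hB
  have hU : ∀ x, x ∈ S ∨ x ∈ T := by
    intro x
    by_contra! hx
    have := key hS hx.1 T hTi hx.2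
    omega
  have hD : ∀ x ∈ S, x ∉ T := by
    intro x hxS hxT
    obtain ⟨y, hy⟩ := hiso x
    rcases hU y with h | h
    · exact indep_not_adj hSi hxS h hy
    · exact indep_not_adj hTi hxT h hy
  have hcard : T.ncard = S.ncard + 1 := by
    obtain ⟨v, hvT⟩ : T.Nonempty := by
      rw [← Set.ncard_pos (Set.toFinite _)]; omega
    have h1 := key hS (fun h => hD v h hvT) (T \ {v}) (hTi.mono' Set.diff_subset) (by simp)
    have := Set.ncard_diff_singleton_add_one hvT (Set.toFinite _)
    omega
  have hleaf : ∀ s ∈ S, ∃ t u, t ≠ u ∧ t ∈ T ∧ u ∈ T ∧ (∀ y, G.Adj t y → y = s) ∧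
      (∀ y, G.Adj u y → y = s) := by
    intro s hs
    obtain ⟨U, hSU, hUm⟩ := exists_maximal (G := G) (A := {s}ᶜ) (S := S \ {s})
      (fun x hx => hx.2) (hSi.mono' Set.diff_subset)
    have hle := (hw s U hUm).2.2 T (Set.subset_compl_singleton_iff.2 (hD s hs)) hTi
    have h1 := Set.ncard_diff_singleton_add_one hs (Set.toFinite _)
    have h2 := Set.ncard_diff_add_ncard_of_subset hSU (Set.toFinite _)
    have h3 : 1 < (U \ (S \ {s})).ncard := by omega
    obtain ⟨t, u, ht, hu, htu⟩ := (Set.one_lt_ncard_iff (Set.toFinite _)).1 h3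
    have aux : ∀ t ∈ U \ (S \ {s}), t ∈ T ∧ ∀ y, G.Adj t y → y = s := by
      intro t ht
      have hts : t ≠ s := hUm.1 ht.1
      have htT : t ∈ T := (hU t).resolve_left (fun h => ht.2 ⟨h, hts⟩)
      refine ⟨htT, fun y hy => ?_⟩
      by_contra hys
      rcases hU y with h | h
      · exact indep_not_adj hUm.2.1 ht.1 (hSU ⟨h, hys⟩) hy
      · exact indep_not_adj hTi htT h hy
    exact ⟨t, u, htu, (aux t ht).1, (aux u hu).1, (aux t ht).2, (aux u hu).2⟩
  obtain ⟨t, htT⟩ : T.Nonempty := by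
    rw [← Set.ncard_pos (Set.toFinite _)]; omega
  obtain ⟨s, hs, -⟩ := maximal_adj hS (fun h => hD t h htT)
  by_cases hss : ∃ s' ∈ S, s' ≠ s
  · obtain ⟨s', hs', hne⟩ := hss
    obtain ⟨a, b, hab, haT, hbT, ha, hb⟩ := hleaf s hs
    obtain ⟨c, d, hcd, hcT, hdT, hc, hd⟩ := hleaf s' hs'
    have hx : ∀ {x y}, (∀ z, G.Adj x z → z = s) → (∀ z, G.Adj y z → z = s') → x ≠ y := by
      rintro x y h h' rfl
      obtain ⟨z, hz⟩ := hiso x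
      exact hne ((h' z hz).symm.trans (h z hz))
    have hnS : ∀ {x}, x ∈ T → x ∉ (S \ {s}) \ {s'} := fun hx h => hD _ h.1.1 hx
    have hi : IsIndep G (insert a (insert b (insert c (insert d ((S \ {s}) \ {s'}))))) := by
      have hn : ∀ {x y}, x ∈ T → y ∈ T → ¬ G.Adj x y := fun hx hy => indep_not_adj hTi hx hy
      refine indep_insert (indep_insert (indep_insert (indep_insert
        (hSi.mono' (Set.diff_subset.trans Set.diff_subset)) ?_) ?_) ?_) ?_
      · intro y hy h
        exact hy.2 (hd y h)
      · rintro y (rfl | hy) h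
        · exact hn hcT hdT h
        · exact hy.2 (hc y h)
      · rintro y (rfl | rfl | hy) h
        · exact hn hbT hcT h
        · exact hn hbT hdT h
        · exact hy.1.2 (hb y h)
      · rintro y (rfl | rfl | rfl | hy) h
        · exact hn haT hbT h
        · exact hn haT hcT h
        · exact hn haT hdT h
        · exact hy.1.2 (ha y h)
    have hle := key hT (hD s hs) _ hi (by
      have := fun {x} (hx : x ∈ T) (h : s = x) => hD s hs (h ▸ hx)
      simp only [Set.mem_insert_iff, Set.mem_diff, Set.mem_singleton_iff, not_true, and_false,
        false_and, or_false, not_or]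
      exact ⟨this haT, this hbT, this hcT, this hdT⟩)
    have hac := hx ha hc
    have had := hx ha hd
    have hbc := hx hb hc
    have hbd := hx hb hd
    have e1 := Set.ncard_diff_singleton_add_one hs (Set.toFinite _)
    have e2 := Set.ncard_diff_singleton_add_one (show s' ∈ S \ {s} from ⟨hs', hne⟩) (Set.toFinite _)
    rw [Set.ncard_insert_of_notMem _ (Set.toFinite _), Set.ncard_insert_of_notMem _ (Set.toFinite _),
      Set.ncard_insert_of_notMem _ (Set.toFinite _),
      Set.ncard_insert_of_notMem (hnS hdT) (Set.toFinite _)] at hle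
    · omega
    · rintro (h | h)
      exacts [hcd h, hnS hcT h]
    · rintro (h | h | h)
      exacts [hbc h, hbd h, hnS hbT h]
    · rintro (h | h | h | h)
      exacts [hab h, hac h, had h, hnS haT h]
  · push Not at hss
    have hSs : S = {s} := Set.eq_singleton_iff_unique_mem.2 ⟨hs, hss⟩
    rw [hSs, Set.ncard_singleton] at hcard
    obtain ⟨a, b, hab, hTab⟩ := Set.ncard_eq_two.1 hcard
    have haT : a ∈ T := by simp [hTab]
    have hbT : b ∈ T := by simp [hTab]
    have hadj : ∀ x ∈ T, G.Adj s x := by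
      intro x hx
      obtain ⟨y, hy, hxy⟩ := maximal_adj hS (fun h => hD x h hx)
      rw [hss y hy] at hxy
      exact hxy.symm
    obtain ⟨e⟩ := path_iso (G := G) (s := s) (t := a) (u := b) (by
      intro x
      have := hU x
      rw [hSs, hTab] at this
      simpa using this) hab (hadj a haT) (hadj b hbT) (indep_not_adj hTi haT hbT)
    exact hp.false e

theorem extend_avoid {V : Type*} [Fintype V] {G : SimpleGraph V}
    (hiso : ∀ v : V, (G.neighborSet v).Nonempty) (hG : WellCovered G)
    (hw : ∀ v : V, WellCoveredOn G {v}ᶜ) {A B : Set V} (hB : IsIndep G B)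
    (hd : Disjoint A B) : ∀ n : ℕ, ∀ T : Set V, A ⊆ T → IsMaxIndep G T → (T ∩ B).ncard ≤ n →
      ∃ T', A ⊆ T' ∧ IsMaxIndep G T' ∧ Disjoint T' B := by
  intro n
  induction n with
  | zero =>
    intro T hA hT hn
    refine ⟨T, hA, hT, ?_⟩
    rw [Set.disjoint_iff_inter_eq_empty]
    exact (Set.ncard_eq_zero (Set.toFinite _)).1 (by omega)
  | succ n ih =>
    intro T hA hT hn
    rcases Set.eq_empty_or_nonempty (T ∩ B) with he | ⟨v, hvT, hvB⟩
    · exact ⟨T, hA, hT, Set.disjoint_iff_inter_eq_empty.2 he⟩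
    obtain ⟨U, hTU, hUm⟩ := exists_maximal (G := G) (A := {v}ᶜ) (S := T \ {v})
      (fun x hx => hx.2) (hT.2.1.mono' Set.diff_subset)
    obtain ⟨u, hu⟩ := hiso v
    obtain ⟨W, huW, hW⟩ := exists_maximal (G := G) (Set.subset_univ {u})
      (Set.pairwise_singleton _ _)
    have hvW : v ∉ W := fun h => indep_not_adj hW.2.1 h (huW rfl) hu
    have hWU := (hw v U hUm).2.2 W (Set.subset_compl_singleton_iff.2 hvW) hW.2.1
    refine ih U ?_ ⟨Set.subset_univ _, hUm.2.1, fun X hX hXi =>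
      ((hG W hW).2.2 X hX hXi).trans hWU⟩ ?_
    · intro x hx
      refine hTU ⟨hA hx, ?_⟩
      rintro rfl
      exact Set.disjoint_left.1 hd hx hvB
    · have hsub : U ∩ B ⊆ (T ∩ B) \ {v} := by
        rintro x ⟨hxU, hxB⟩
        have hxv : x ≠ v := hUm.1 hxU
        refine ⟨⟨?_, hxB⟩, hxv⟩
        by_contra hxT
        obtain ⟨y, hy, hxy⟩ := maximal_adj (maximal_of_max hT) hxT
        by_cases hyv : y = v
        · subst hyv
          exact indep_not_adj hB hxB hvB hxy
        · exact indep_not_adj hUm.2.1 hxU (hTU ⟨hy, hyv⟩) hxy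
      have h1 := Set.ncard_le_ncard hsub (Set.toFinite _)
      have h2 := Set.ncard_diff_singleton_add_one (show v ∈ T ∩ B from ⟨hvT, hvB⟩) (Set.toFinite _)
      omega

/-- A graph with no isolated vertices is in `W₂` iff it is not isomorphic
to `P₃` and `G − v` is well-covered for every vertex `v`. -/
theorem stmt9 {V : Type*} [Fintype V] (G : SimpleGraph V)
    (hiso : ∀ v : V, (G.neighborSet v).Nonempty) :
    W2 G ↔
      (IsEmpty (G ≃g pathGraph 3) ∧ ∀ v : V, WellCoveredOn G {v}ᶜ) := by
  refine ⟨fun h => ⟨h.not_path, h.wc⟩, fun ⟨hp, hw⟩ => ?_⟩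
  have hG := wellCovered_of hiso hp hw
  have main : ∀ A B : Set V, IsIndep G A → IsIndep G B → Disjoint A B →
      ∃ T', A ⊆ T' ∧ IsMaxIndep G T' ∧ Disjoint T' B := by
    intro A B hA hB hd
    obtain ⟨T, hAT, hT⟩ := exists_maximal (Set.subset_univ A) hA
    exact extend_avoid hiso hG hw hB hd _ T hAT (hG T hT) le_rfl
  intro S₁ S₂ _ _ h1 h2 hd
  obtain ⟨T₁, hS1, hT1, hd1⟩ := main S₁ S₂ h1 h2 hd
  obtain ⟨T₂, hS2, hT2, hd2⟩ := main S₂ T₁ h2 hT1.2.1 hd1.symm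
  exact ⟨T₁, T₂, hS1, hS2, hT1, hT2, hd2.symm⟩
end
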